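/- Let S be a (0-)bisimple inverse semigroup with maximal subgroup G at a (non-zero) idempotent and let R be a commutative ring with unit such that the group algebra RG is prime. Then the (contracted) semigroup algebra RS (respectively R_0S) is a prime ring. Conversely, if E(S) is pseudofinite and RS (resp. R_0S) is prime, then S is (0-)bisimple and RG is prime. -/

import Mathlib

/-!
Both algebras are treated at once by working in `RS` modulo the span of a two-sided ideal `I` of `S`:
`I = ∅` gives `RS` and `I = {z}` gives `R₀S`.  Write `d s = s⋆ s` and `r s = s s⋆`, and let `G` be
the maximal subgroup at an idempotent `e ∉ I`.

*Sufficiency.*  Suppose `a x b` is supported in `I` for all `x`, with `a`, `b` not supported in `I`.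
Translating `b` on both sides (`exists_translate`), one may assume that `b` is supported in `S e`,
that every element of its support with domain `e` lies in `G`, and that the coefficient at `e` is
nonzero.  The translation is chosen by an element of the support whose domain is maximal and, subject
to that, whose range is minimal; `IsInv.extremal` says that this works.  The same is done to `a`.  On
such elements restriction of the support to `G` satisfies `(a g b)|_G = a|_G g b|_G` for `g ∈ G`
(`restrict_mul`), so `a|_G` and `b|_G` are nonzero elements of `RG` with `a|_G g b|_G = 0` for all
`g`, contradicting primeness of `RG`.

*Necessity.*  If `E(S)` is pseudofinite, the product `p_e = ∏ (e - f)` over generators `f` of the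
lower set strictly below `e` has coefficient `1` at `e` and is annihilated by every idempotent
strictly below `e` (`exists_isPoint`).  Hence `p_f s p_e` vanishes or equals `p_f t p_e` with
`d t = e` and `r t = f` (`IsPoint.sandwich`).  If no such `t` exists then `p_f RS p_e = 0`, so
primeness forces all idempotents outside `I` to be `D`-equivalent.  For `f = e` the elements of `G`
commute with `p_e`, and `α ↦ α p_e` embeds `RG` in `RS` modulo `I`; from `α RG β = 0` one gets
`(α p_e) RS (p_e β) = 0`, so `RG` inherits primeness.
-/

section InverseSemigroup

variable (S : Type) [Semigroup S] (star : S → S)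

/-- The maximal subgroup of an inverse semigroup at an idempotent `e`. -/
def MaxGrp (e : S) : Type := {s : S // star s * s = e ∧ s * star s = e}

variable (h1 : ∀ s, s * star s * s = s)
  (h2 : ∀ s, star s * s * star s = star s)
  (h3 : ∀ s t, s * t * s = s → t * s * t = t → t = star s)

/-- The group structure on the maximal subgroup at an idempotent `e`. -/
def maxGroup (e : S) (he : e * e = e) : Group (MaxGrp S star e) := by
  have ss : ∀ x : S, x = star (star x) := fun x => h3 (star x) x (h2 x) (h1 x)
  have he1 : ∀ x : S, star x * x = e → x * e = x := fun x hx => by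
    rw [← hx, ← mul_assoc]; exact h1 x
  have he2 : ∀ x : S, x * star x = e → e * x = x := fun x hx => by
    rw [← hx]; exact h1 x
  have hs1 : ∀ x : S, star x * x = e → e * star x = star x := fun x hx => by
    rw [← hx]; exact h2 x
  have hs2 : ∀ x : S, x * star x = e → star x * e = star x := fun x hx => by
    rw [← hx, ← mul_assoc]; exact h2 x
  have stare : star e = e := (h3 e e (by rw [he, he]) (by rw [he, he])).symm
  have smul : ∀ a b : S, (star a * a = e ∧ a * star a = e) →
      (star b * b = e ∧ b * star b = e) → star (a * b) = star b * star a := by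
    intro a b ha hb
    refine (h3 (a * b) (star b * star a) ?_ ?_).symm
    · calc a * b * (star b * star a) * (a * b)
          = a * (b * star b) * (star a * a) * b := by simp only [mul_assoc]
        _ = a * e * e * b := by rw [hb.2, ha.1]
        _ = a * b := by rw [he1 a ha.1, he1 a ha.1]
    · calc star b * star a * (a * b) * (star b * star a)
          = star b * (star a * a) * (b * star b) * star a := by simp only [mul_assoc]
        _ = star b * e * e * star a := by rw [ha.1, hb.2]
        _ = star b * star a := by rw [hs2 b hb.2, hs2 b hb.2]
  exact
  { mul := fun a b => ⟨a.1 * b.1, by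
      constructor
      · rw [smul a.1 b.1 a.2 b.2, mul_assoc, ← mul_assoc (star a.1), a.2.1,
          he2 b.1 b.2.2, b.2.1]
      · rw [smul a.1 b.1 a.2 b.2, mul_assoc, ← mul_assoc b.1, b.2.2,
          hs1 a.1 a.2.1, a.2.2]⟩
    one := ⟨e, by rw [stare, he], by rw [stare, he]⟩
    inv := fun a => ⟨star a.1, by rw [← ss a.1]; exact a.2.2, by rw [← ss a.1]; exact a.2.1⟩
    mul_assoc := fun a b c => Subtype.ext (mul_assoc a.1 b.1 c.1)
    one_mul := fun a => Subtype.ext (he2 a.1 a.2.2)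
    mul_one := fun a => Subtype.ext (he1 a.1 a.2.1)
    inv_mul_cancel := fun a => Subtype.ext a.2.1 }

end InverseSemigroup

section Defs

variable (S : Type) [Semigroup S] (star : S → S)

/-- The natural partial order on idempotents: `f ≤ e` iff `fe = f = ef`. -/
def IdemLe (f e : S) : Prop := f * e = f ∧ e * f = f

/-- `E(S)` is pseudofinite: for each idempotent `e`, the set of idempotents
strictly below `e` is finitely generated as a lower set. -/
def Pseudofinite : Prop :=
  ∀ e : S, e * e = e → ∃ F : Finset S,
    (∀ f ∈ F, f * f = f ∧ IdemLe S f e ∧ f ≠ e) ∧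
    (∀ f : S, f * f = f → IdemLe S f e → f ≠ e → ∃ g ∈ F, IdemLe S f g)

/-- `S` is bisimple. -/
def Bisimple : Prop :=
  ∀ e f : S, e * e = e → f * f = f → ∃ s : S, star s * s = e ∧ s * star s = f

/-- `S` (with zero `z`) is `0`-bisimple. -/
def ZeroBisimple (z : S) : Prop :=
  ∀ e f : S, e * e = e → f * f = f → e ≠ z → f ≠ z →
    ∃ s : S, star s * s = e ∧ s * star s = f

/-- The contracted semigroup algebra `R₀S = RS/Rz`. -/
abbrev Contracted (R : Type) [CommRing R] (z : S) : Type :=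
  (ringConGen fun a b : MonoidAlgebra R S =>
    a = MonoidAlgebra.single z (1 : R) ∧ b = 0).Quotient

end Defs

/-- A (possibly non-unital) ring is prime. -/
def IsPrimeRingE (A : Type*) [Mul A] [Zero A] : Prop :=
  (∃ a : A, a ≠ 0) ∧ ∀ a b : A, (∀ x : A, a * x * b = 0) → a = 0 ∨ b = 0

/-! ### Inverse semigroups -/

/-- The axioms of an inverse semigroup: `star s` is the unique generalized inverse of `s`. -/
structure IsInv {S : Type} [Semigroup S] (star : S → S) : Prop where
  reg : ∀ s, s * star s * s = s
  reg' : ∀ s, star s * s * star s = star s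
  uniq : ∀ s t, s * t * s = s → t * s * t = t → t = star s

namespace IsInv

variable {S : Type} [Semigroup S] {star : S → S} (H : IsInv star)
include H

lemma star_star (s : S) : star (star s) = s :=
  (H.uniq (star s) s (H.reg' s) (H.reg s)).symm

lemma star_idem {e : S} (he : e * e = e) : star e = e :=
  (H.uniq e e (by rw [he, he]) (by rw [he, he])).symm

/-- A product of idempotents is idempotent: the inverse `x` of `e * f` equals `f * x * e`, hence is
idempotent, hence is its own inverse. -/
lemma idem_mul {e f : S} (he : e * e = e) (hf : f * f = f) : (e * f) * (e * f) = e * f := by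
  have a1 := H.reg (e * f)
  have a2 := H.reg' (e * f)
  set x := star (e * f) with hx
  have hx' : f * x * e = x := by
    refine H.uniq _ _ ?_ ?_
    · calc e * f * (f * x * e) * (e * f) = e * (f * f) * x * (e * e) * f := by
            simp only [mul_assoc]
        _ = e * f * x * (e * f) := by rw [he, hf]; simp only [mul_assoc]
        _ = e * f := a1
    · calc f * x * e * (e * f) * (f * x * e) = f * (x * (e * e) * (f * f) * x) * e := by
            simp only [mul_assoc]
        _ = f * (x * (e * f) * x) * e := by rw [he, hf]; simp only [mul_assoc]
        _ = f * x * e := by rw [a2]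
  have hxx : x * x = x := by
    calc x * x = f * x * e * (f * x * e) := by rw [hx']
      _ = f * (x * (e * f) * x) * e := by simp only [mul_assoc]
      _ = x := by rw [a2, hx']
  have : e * f = x := by rw [← H.star_star (e * f), ← hx, H.star_idem hxx]
  rw [this, hxx]

lemma idem_comm {e f : S} (he : e * e = e) (hf : f * f = f) : e * f = f * e := by
  have a := H.idem_mul he hf
  have b := H.idem_mul hf he
  have : f * e = star (e * f) := by
    refine H.uniq _ _ ?_ ?_
    · calc e * f * (f * e) * (e * f) = e * (f * f) * (e * e) * f := by simp only [mul_assoc]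
        _ = e * f := by rw [he, hf, ← mul_assoc] at *; simpa only [mul_assoc] using a
    · calc f * e * (e * f) * (f * e) = f * (e * e) * (f * f) * e := by simp only [mul_assoc]
        _ = f * e := by rw [he, hf]; simpa only [mul_assoc] using b
  rw [this, H.star_idem a]

lemma d_idem (s : S) : star s * s * (star s * s) = star s * s := by
  rw [← mul_assoc, H.reg']

lemma r_idem (s : S) : s * star s * (s * star s) = s * star s := by
  rw [← mul_assoc, H.reg]

lemma star_mul (a b : S) : star (a * b) = star b * star a := by
  have hc := H.idem_comm (H.r_idem b) (H.d_idem a)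
  refine (H.uniq _ _ ?_ ?_).symm
  · calc a * b * (star b * star a) * (a * b)
          = a * ((b * star b) * (star a * a)) * b := by simp only [mul_assoc]
      _ = (a * star a * a) * (b * star b * b) := by rw [hc]; simp only [mul_assoc]
      _ = a * b := by rw [H.reg, H.reg]
  · calc star b * star a * (a * b) * (star b * star a)
          = star b * ((star a * a) * (b * star b)) * star a := by simp only [mul_assoc]
      _ = (star b * b * star b) * (star a * a * star a) := by rw [← hc]; simp only [mul_assoc]
      _ = star b * star a := by rw [H.reg' b, H.reg' a]

/-- Let `x` have domain `e` and range the
domain of `t₁`.  If `(t₁ x)⋆ t x` has domain `e`, then the domain of `t` lies above that of `t₁`;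
when equality is forced there, the range of `t` lies below that of `t₁`; and when equality is
forced there too, the product lies in the maximal subgroup at `e` and determines `t`. -/
lemma extremal {e x t₁ t : S} (hx : star x * x = e) (hx' : x * star x = star t₁ * t₁)
    (hmax : star t₁ * t₁ * (star t * t) = star t₁ * t₁ → star t * t = star t₁ * t₁)
    (hmin : star t * t = star t₁ * t₁ → t₁ * star t₁ * (t * star t) = t * star t →
      t * star t = t₁ * star t₁)
    (h : star (star (t₁ * x) * t * x) * (star (t₁ * x) * t * x) = e) :
    star (t₁ * x) * t * x * star (star (t₁ * x) * t * x) = e ∧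
      (star (t₁ * x) * t * x = e → t = t₁) := by
  have k1 : ∀ a, a * (star a * a) = a := fun a => by rw [← mul_assoc, H.reg]
  have k' : ∀ a b, star a * (a * (star a * b)) = star a * b := fun a b => by
    rw [← mul_assoc, ← mul_assoc, H.reg']
  have k1' : ∀ a, star a * (a * star a) = star a := fun a => by rw [← mul_assoc, H.reg']
  have hx'' : ∀ b, x * (star x * b) = star t₁ * (t₁ * b) := fun b => by
    rw [← mul_assoc, hx', mul_assoc]
  simp only [H.star_mul, H.star_star] at h ⊢
  have e1 : x * e * star x = star t₁ * t₁ := by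
    rw [← hx, ← hx', ← mul_assoc, H.reg]
  have e2 : star t₁ * t₁ * (star t * (t₁ * star t₁) * t) * (star t₁ * t₁) = star t₁ * t₁ := by
    conv_rhs => rw [← e1, ← h]
    simp only [mul_assoc, hx', hx'', k']
  have ht : star t * t = star t₁ * t₁ := by
    apply hmax
    rw [H.idem_comm (H.d_idem t₁) (H.d_idem t)]
    calc star t * t * (star t₁ * t₁) = star t * t * (star t₁ * t₁) *
          (star t * (t₁ * star t₁) * t * (star t₁ * t₁)) := by
            conv_lhs => rw [← e2]
            simp only [mul_assoc]
      _ = (star t₁ * t₁) * (star t * t) * (star t * (t₁ * star t₁) * t * (star t₁ * t₁)) := by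
            rw [H.idem_comm (H.d_idem t₁) (H.d_idem t)]
      _ = star t₁ * t₁ := by
            conv_rhs => rw [← e2]
            simp only [mul_assoc, k']
  have td : t * (star t₁ * t₁) = t := by rw [← ht, k1]
  have td' : star t₁ * (t₁ * star t) = star t := by rw [← mul_assoc, ← ht, H.reg']
  have hr : t * star t = t₁ * star t₁ := by
    apply hmin ht
    have e3 : star t * (t₁ * star t₁) * t = star t * t := by
      rw [ht]
      conv_rhs => rw [← e2]
      rw [← ht]
      simp only [mul_assoc, k', k1]
    have e4 : t * (star t * (t₁ * star t₁) * t) * star t = t * star t := by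
      rw [e3, k1]
    rw [← H.idem_comm (H.r_idem t) (H.r_idem t₁)]
    calc t * star t * (t₁ * star t₁)
        = t * star t * (t * star t) * (t₁ * star t₁) := by rw [H.r_idem]
      _ = t * star t * ((t * star t) * (t₁ * star t₁)) := by rw [mul_assoc]
      _ = t * (star t * (t₁ * star t₁) * t) * star t := by
            rw [H.idem_comm (H.r_idem t) (H.r_idem t₁)]; simp only [mul_assoc]
      _ = t * star t := e4
  constructor
  · calc star x * star t₁ * t * x * (star x * (star t * (t₁ * x)))
        = star x * star t₁ * (t * (star t₁ * t₁)) * star t * (t₁ * x) := by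
          simp only [mul_assoc, hx'']
      _ = star x * (star t₁ * (t * star t) * t₁) * x := by rw [td]; simp only [mul_assoc]
      _ = star x * (star t₁ * t₁) * x := by rw [hr]; simp only [mul_assoc, k']
      _ = e := by rw [← hx', ← hx]; simp only [mul_assoc, k']
  · intro h'
    have : t₁ * x * (star x * star t₁ * t * x) * star x = t₁ * x * e * star x := by rw [h']
    calc t = t * star t * t := (H.reg t).symm
      _ = t₁ * (star t₁ * t₁) * star t₁ * (t * (star t₁ * t₁)) := by
          rw [hr, td, k1]
      _ = t₁ * x * (star x * star t₁ * t * x) * star x := by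
          simp only [mul_assoc, hx', hx'']
      _ = t₁ := by rw [this, mul_assoc, mul_assoc, ← mul_assoc x, e1, k1]

/-- Elements of `S e` lying either in the maximal subgroup at `e` or outside the `L`-class of `e`
behave under products through the maximal subgroup like units and non-units: a product has domain
`e` only if both factors have. -/
lemma dom_of_mul {e s g t : S} (hs : s * e = s) (hg : star g * g = e ∧ g * star g = e)
    (ht : t * e = t) (ht2 : star t * t = e → t * star t = e)
    (h : star (s * g * t) * (s * g * t) = e) :
    star s * s = e ∧ star t * t = e := by
  have he : e * e = e := by rw [← hg.1, H.d_idem]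
  have hse : star e = e := H.star_idem he
  have ht' : e * star t = star t := by rw [← hse, ← H.star_mul, ht]
  have hs' : e * star s = star s := by rw [← hse, ← H.star_mul, hs]
  have k1 : ∀ a, a * (star a * a) = a := fun a => by rw [← mul_assoc, H.reg]
  have htd : star t * t = e := by
    have h1 : e * (star t * t) = e := by
      conv_lhs => rw [← h]
      conv_rhs => rw [← h]
      simp only [mul_assoc, k1]
    rw [← mul_assoc, ht'] at h1
    exact h1
  refine ⟨?_, htd⟩
  have htr := ht2 htd
  have hge : g * e = g := by rw [← hg.1, k1]
  have hu : g * t * (star t * star g) = e := by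
    rw [← mul_assoc, mul_assoc g, htr, hge, hg.2]
  have hu' : g * t * e * (star t * star g) = e := by
    rw [mul_assoc g, ht, hu]
  rw [← hu', ← h]
  simp only [H.star_mul]
  calc star s * s = e * (star s * s) * e := by rw [← mul_assoc, hs', mul_assoc, hs]
    _ = g * t * (star t * star g) * (star s * s) * (g * t * (star t * star g)) := by rw [hu]
    _ = _ := by simp only [mul_assoc]

end IsInv

/-! ### Supports and primeness modulo an ideal -/

section Algebra

open MonoidAlgebra

variable {S : Type} [Semigroup S] {R : Type} [CommRing R]

/-- The element `a` of the semigroup algebra is supported in `Q`. -/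
def SuppIn {X : Type} (Q : X → Prop) (a : MonoidAlgebra R X) : Prop := ∀ s, a.coeff s ≠ 0 → Q s

lemma SuppIn.induction {X : Type} {Q : X → Prop} {motive : MonoidAlgebra R X → Prop}
    {a : MonoidAlgebra R X} (ha : SuppIn Q a) (zero : motive 0)
    (add : ∀ a b, motive a → motive b → motive (a + b))
    (single : ∀ s r, Q s → motive (single s r)) : motive a := by
  classical
  have : a = ∑ s ∈ a.coeff.support, MonoidAlgebra.single s (a.coeff s) :=
    (sum_coeff_single a).symm
  rw [this]
  refine Finset.sum_induction _ motive add zero fun s hs => single _ _ (ha s ?_)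
  simpa using hs

lemma SuppIn.add {X : Type} {Q : X → Prop} {a b : MonoidAlgebra R X} (ha : SuppIn Q a)
    (hb : SuppIn Q b) : SuppIn Q (a + b) := by
  intro s hs
  by_cases h : a.coeff s = 0
  · refine hb s fun h' => hs ?_
    rw [coeff_add, Finsupp.add_apply, h, h', add_zero]
  · exact ha s h

lemma SuppIn.neg {X : Type} {Q : X → Prop} {a : MonoidAlgebra R X} (ha : SuppIn Q a) :
    SuppIn Q (-a) := by
  intro s hs
  exact ha s (by simpa using hs)

lemma SuppIn.zero {X : Type} {Q : X → Prop} : SuppIn Q (0 : MonoidAlgebra R X) := by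
  intro s hs
  simp at hs

lemma SuppIn.single {X : Type} {Q : X → Prop} {s : X} (r : R) (hs : Q s) :
    SuppIn Q (single s r) := by
  classical
  intro t ht
  rw [coeff_single, Finsupp.single_apply] at ht
  split_ifs at ht with h
  · exact h ▸ hs
  · exact absurd rfl ht

lemma SuppIn.mul {P Q W : S → Prop} {a b : MonoidAlgebra R S} (ha : SuppIn P a) (hb : SuppIn Q b)
    (h : ∀ s t, P s → Q t → W (s * t)) : SuppIn W (a * b) := by
  refine ha.induction (motive := fun a => SuppIn W (a * b)) (by rw [zero_mul]; exact .zero)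
    (fun _ _ h1 h2 => by rw [add_mul]; exact h1.add h2) fun s r hs => ?_
  refine hb.induction (motive := fun b => SuppIn W (_ * b)) (by rw [mul_zero]; exact .zero)
    (fun _ _ h1 h2 => by rw [mul_add]; exact h1.add h2) fun t r' ht => ?_
  rw [single_mul_single]
  exact .single _ (h _ _ hs ht)

/-- Primeness of the algebra `RS` modulo the span of `I`, expressed in `RS` itself.  Taking
`I = ∅` gives `RS`, and `I = {z}` with `z` a zero gives the contracted algebra. -/
def PrimeMod (R : Type) [CommRing R] (I : Set S) : Prop :=
  (∃ a : MonoidAlgebra R S, ¬ SuppIn (· ∈ I) a) ∧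
    ∀ a b : MonoidAlgebra R S, (∀ x, SuppIn (· ∈ I) (a * x * b)) →
      SuppIn (· ∈ I) a ∨ SuppIn (· ∈ I) b

lemma suppIn_empty_iff {a : MonoidAlgebra R S} : SuppIn (· ∈ (∅ : Set S)) a ↔ a = 0 := by
  constructor
  · intro h
    ext s
    by_contra h'
    exact h s h'
  · rintro rfl
    exact .zero

lemma primeMod_empty : PrimeMod R (∅ : Set S) ↔ IsPrimeRingE (MonoidAlgebra R S) := by
  simp only [PrimeMod, IsPrimeRingE, suppIn_empty_iff, ne_eq]

lemma suppIn_zero_ideal {z : S} (hz : ∀ s : S, z * s = z ∧ s * z = z)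
    {a b : MonoidAlgebra R S} (ha : SuppIn (· ∈ ({z} : Set S)) a) :
    SuppIn (· ∈ ({z} : Set S)) (a * b) ∧ SuppIn (· ∈ ({z} : Set S)) (b * a) := by
  have hb : SuppIn (fun _ => True) b := fun _ _ => trivial
  refine ⟨ha.mul hb fun s t hs _ => ?_, hb.mul ha fun s t _ ht => ?_⟩
  · rw [Set.mem_singleton_iff] at hs ⊢
    rw [hs, (hz t).1]
  · rw [Set.mem_singleton_iff] at ht ⊢
    rw [ht, (hz s).2]

/-- The congruence on `RS` of having equal coefficients away from the zero `z`. -/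
def zeroCon (R : Type) [CommRing R] {z : S} (hz : ∀ s : S, z * s = z ∧ s * z = z) :
    RingCon (MonoidAlgebra R S) where
  r a b := SuppIn (· ∈ ({z} : Set S)) (a - b)
  iseqv :=
    { refl := fun a => by rw [sub_self]; exact .zero
      symm := fun {a b} h => by rw [← neg_sub]; exact h.neg
      trans := fun {a b c} h h' => by rw [← sub_add_sub_cancel]; exact h.add h' }
  add' := fun {a b c d} h h' => by rw [add_sub_add_comm]; exact h.add h'
  mul' := fun {a b c d} h h' => by
    have : a * c - b * d = (a - b) * c + b * (c - d) := by
      rw [sub_mul, mul_sub]; abel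
    rw [this]
    exact (suppIn_zero_ideal hz h).1.add
      (suppIn_zero_ideal hz h').2

lemma contracted_mk_eq_zero {z : S} (hz : ∀ s : S, z * s = z ∧ s * z = z)
    (a : MonoidAlgebra R S) :
    ((a : Contracted S R z) = 0) ↔ SuppIn (· ∈ ({z} : Set S)) a := by
  rw [← RingCon.coe_zero, RingCon.eq]
  constructor
  · intro h
    have hle : ringConGen (fun a b : MonoidAlgebra R S => a = single z (1 : R) ∧ b = 0) ≤
        zeroCon R hz := by
      rw [RingCon.ringConGen_le]
      rintro a b ⟨rfl, rfl⟩
      change SuppIn _ (_ - _)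
      rw [sub_zero]
      exact .single _ rfl
    have h' : SuppIn (· ∈ ({z} : Set S)) (a - 0) := hle h
    rwa [sub_zero] at h'
  · intro h
    set c := ringConGen (fun a b : MonoidAlgebra R S => a = single z (1 : R) ∧ b = 0)
    refine h.induction (motive := fun a => c a 0) (c.refl 0)
      (fun a b ha hb => by simpa using c.add ha hb) ?_
    rintro s r rfl
    have h0 : c (single s (1 : R)) 0 := RingConGen.Rel.of _ _ ⟨rfl, rfl⟩
    have := c.mul (c.refl (single s r)) h0
    rwa [single_mul_single, (hz s).1, mul_one, mul_zero] at this

lemma primeMod_zero {z : S} (hz : ∀ s : S, z * s = z ∧ s * z = z) :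
    PrimeMod R ({z} : Set S) ↔ IsPrimeRingE (Contracted S R z) := by
  have key := contracted_mk_eq_zero (R := R) hz
  constructor
  · rintro ⟨⟨a, ha⟩, h⟩
    refine ⟨⟨(a : Contracted S R z), fun h' => ha ((key a).1 h')⟩, fun a b => ?_⟩
    obtain ⟨a, rfl⟩ := Quotient.exists_rep a
    obtain ⟨b, rfl⟩ := Quotient.exists_rep b
    intro hab
    refine (h a b fun x => (key _).1 ?_).imp (key a).2 (key b).2
    exact hab (x : Contracted S R z)
  · rintro ⟨⟨a, ha⟩, h⟩
    obtain ⟨a, rfl⟩ := Quotient.exists_rep a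
    refine ⟨⟨a, fun h' => ha ((key a).2 h')⟩, fun a b hab => ?_⟩
    refine (h (a : Contracted S R z) (b : Contracted S R z) fun x => ?_).imp (key a).1 (key b).1
    obtain ⟨x, rfl⟩ := Quotient.exists_rep x
    exact (key _).2 (hab x)

end Algebra

/-! ### Sufficiency -/

lemma exists_max_rel {X : Type} (r : X → X → Prop) (hr : ∀ a, r a a)
    (ht : ∀ a b c, r a b → r b c → r a c) (A : Finset X) (hA : A.Nonempty) :
    ∃ m ∈ A, ∀ a ∈ A, r m a → r a m := by
  let _ : Preorder X := { le := r, le_refl := hr, le_trans := ht }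
  obtain ⟨m, hm⟩ := A.exists_maximal hA
  exact ⟨m, hm.1, fun a ha h => hm.2 ha h⟩

section Sufficiency

open MonoidAlgebra

variable {S : Type} [Semigroup S] {R : Type} [CommRing R] {star : S → S}

lemma coeff_single_mul_mul_single [DecidableEq S] (u v w : S) (b : MonoidAlgebra R S) :
    (single u 1 * b * single v 1).coeff w =
      ∑ t ∈ b.coeff.support, if u * t * v = w then b.coeff t else 0 := by
  conv_lhs => rw [← sum_coeff_single b, Finsupp.sum]
  simp only [Finset.mul_sum, Finset.sum_mul, single_mul_single, one_mul, mul_one, coeff_sum,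
    Finsupp.finsetSum_apply, coeff_single, Finsupp.single_apply]

/-- Bisimplicity outside `I`: all idempotents not in `I` are `D`-equivalent. -/
def BisimpleMod (star : S → S) (I : Set S) : Prop :=
  ∀ e f : S, e * e = e → f * f = f → e ∉ I → f ∉ I → ∃ s : S, star s * s = e ∧ s * star s = f

/-- Elements of `S e` which, if they have domain `e`, lie in the maximal subgroup at `e`. -/
def UnitOrLow (star : S → S) (e s : S) : Prop :=
  s * e = s ∧ (star s * s = e → s * star s = e)

/-- If all idempotents outside the ideal `I` are `D`-equivalent, an element `b` not supported in `I`
can be translated to an element with no support in the `L`-class of `e` outside the maximal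
subgroup, and with nonzero coefficient at `e`.  The translation is by `(t₁ x)⋆` on the left and `x`
on the right, where the domain of `t₁` is maximal among those of elements of the support outside
`I`, the range of `t₁` is minimal among those of elements of the support with this domain, and `x`
has domain `e` and range the domain of `t₁`. -/
lemma exists_translate (H : IsInv star) {I : Set S} (hI : ∀ s ∈ I, ∀ t, s * t ∈ I ∧ t * s ∈ I)
    (hB : BisimpleMod star I) {e : S} (he : e * e = e) (heI : e ∉ I) (b : MonoidAlgebra R S)
    (hb : ¬ SuppIn (· ∈ I) b) :
    ∃ u v : S, (single u 1 * b * single v 1).coeff e ≠ 0 ∧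
      SuppIn (UnitOrLow star e) (single u 1 * b * single v 1) := by
  classical
  have k1 : ∀ a, a * (star a * a) = a := fun a => by rw [← mul_assoc, H.reg]
  have tr : ∀ f g h : S, f * g = f → g * h = g → f * h = f := fun f g h a b => by
    rw [← a, mul_assoc, b]
  unfold SuppIn at hb
  push Not at hb
  obtain ⟨s₀, hs₀, hs₀I⟩ := hb
  -- `t₀` has maximal domain in the support outside `I`
  obtain ⟨t₀, ht₀, hmax⟩ := exists_max_rel (fun s t => star s * s * (star t * t) = star s * s)
    (fun a => H.d_idem a) (fun a b c => tr _ _ _) (b.coeff.support.filter (· ∉ I))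
    ⟨s₀, by simp [hs₀, hs₀I]⟩
  rw [Finset.mem_filter, Finsupp.mem_support_iff] at ht₀
  -- `t₁` has minimal range among the elements of the support with that domain
  obtain ⟨t₁, ht₁, hmin⟩ := exists_max_rel (fun s t => t * star t * (s * star s) = t * star t)
    (fun a => H.r_idem a) (fun a b c h h' => tr _ _ _ h' h)
    (b.coeff.support.filter (fun t => star t * t = star t₀ * t₀)) ⟨t₀, by simp [ht₀.1]⟩
  rw [Finset.mem_filter, Finsupp.mem_support_iff] at ht₁
  have hd : star t₁ * t₁ ∉ I := fun h => ht₀.2 (by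
    rw [ht₁.2] at h
    rw [← k1 t₀]
    exact (hI _ h _).2)
  obtain ⟨x, hx, hx'⟩ := hB e _ he (H.d_idem t₁) heI hd
  have key : ∀ t, b.coeff t ≠ 0 →
      star (star (t₁ * x) * t * x) * (star (t₁ * x) * t * x) = e →
      star (t₁ * x) * t * x * star (star (t₁ * x) * t * x) = e ∧
        (star (t₁ * x) * t * x = e → t = t₁) := by
    intro t ht
    refine H.extremal hx hx' (fun h => ?_) (fun h h' => ?_)
    · have htI : t ∉ I := fun hI' => hd (by rw [← h]; exact (hI _ (hI _ hI' _).2 _).2)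
      have := hmax t (by simp [ht, htI]) (by rw [← ht₁.2, h])
      rw [← this, ← ht₁.2, H.idem_comm (H.d_idem t) (H.d_idem t₁), h]
    · have := hmin t (by simp [ht, h, ht₁.2]) (by
        rw [H.idem_comm (H.r_idem t) (H.r_idem t₁), h'])
      rw [← h', this]
  refine ⟨star (t₁ * x), x, ?_, ?_⟩
  · rw [coeff_single_mul_mul_single, Finset.sum_eq_single t₁]
    · rw [if_pos]
      · exact ht₁.1
      · rw [H.star_mul]
        calc star x * star t₁ * t₁ * x = star x * (star t₁ * t₁) * x := by simp only [mul_assoc]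
          _ = star x * x * (star x * x) := by rw [← hx']; simp only [mul_assoc]
          _ = e := by rw [hx, he]
    · intro t ht hne
      rw [if_neg]
      intro h
      exact hne ((key t (by simpa using ht) (by rw [h, H.star_idem he, he])).2 h)
    · intro h
      simp only [Finsupp.mem_support_iff, not_not] at h
      exact absurd h ht₁.1
  · intro w hw
    rw [coeff_single_mul_mul_single] at hw
    obtain ⟨t, ht, hne⟩ := Finset.exists_ne_zero_of_sum_ne_zero hw
    split_ifs at hne with h
    · subst h
      exact ⟨by rw [mul_assoc, ← hx, k1], fun h => (key t hne h).1⟩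
    · exact absurd rfl hne

variable (h1 : ∀ s, s * star s * s = s)
  (h2 : ∀ s, star s * s * star s = star s)
  (h3 : ∀ s t, s * t * s = s → t * s * t = t → t = star s)

/-- Restriction of the support to the maximal subgroup at `e`. -/
noncomputable def restrict (star : S → S) (e : S) (a : MonoidAlgebra R S) : MonoidAlgebra R (MaxGrp S star e) :=
  a.comapDomain Subtype.val Subtype.val_injective

lemma restrict_add (e : S) (a b : MonoidAlgebra R S) :
    restrict star e (a + b) = restrict star e a + restrict star e b :=
  comapDomain_add _ _ _ _

lemma restrict_zero (e : S) : restrict star e (0 : MonoidAlgebra R S) = 0 :=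
  comapDomain_zero _ _

lemma restrict_single {e : S} (g : MaxGrp S star e) (r : R) :
    restrict star e (single g.1 r) = single g r :=
  comapDomain_single_map _ _ _ _

lemma restrict_single_of_not {e s : S} (r : R) (h : ¬ (star s * s = e ∧ s * star s = e)) :
    restrict star e (single s r) = 0 := by
  refine comapDomain_single_of_not_mem_range ?_ _
  rintro ⟨g, rfl⟩
  exact h g.2

/-- Restriction to the maximal subgroup, although not multiplicative on `R(eSe)`, is so on products
of elements with no support in the `L`-class of `e` outside the maximal subgroup. -/
lemma restrict_mul (e : S) (he : e * e = e) (g : MaxGrp S star e) (r : R) (a b : MonoidAlgebra R S)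
    (ha : SuppIn (UnitOrLow star e) a) (hb : SuppIn (UnitOrLow star e) b) :
    letI := maxGroup S star h1 h2 h3 e he
    restrict star e (a * single g.1 r * b) =
      restrict star e a * single g r * restrict star e b := by
  let _ := maxGroup S star h1 h2 h3 e he
  have H : IsInv star := ⟨h1, h2, h3⟩
  refine ha.induction (motive := fun a => restrict star e (a * single g.1 r * b) =
      restrict star e a * single g r * restrict star e b)
    (by simp only [zero_mul, restrict_zero])
    (fun _ _ h1 h2 => by simp only [add_mul, restrict_add, h1, h2]) fun s r₁ hs => ?_
  refine hb.induction (motive := fun b => restrict star e (_ * b) = _ * restrict star e b)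
    (by simp only [mul_zero, restrict_zero])
    (fun _ _ h1 h2 => by simp only [mul_add, restrict_add, h1, h2]) fun t r₂ ht => ?_
  rw [single_mul_single, single_mul_single]
  by_cases h : (star s * s = e) ∧ star t * t = e
  · let s' : MaxGrp S star e := ⟨s, h.1, hs.2 h.1⟩
    let t' : MaxGrp S star e := ⟨t, h.2, ht.2 h.2⟩
    have e1 : restrict star e (single s r₁) = single s' r₁ := restrict_single s' r₁
    have e2 : restrict star e (single t r₂) = single t' r₂ := restrict_single t' r₂
    have e3 : single s' r₁ * single g r * single t' r₂ = single (s' * g * t') (r₁ * r * r₂) := by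
      rw [single_mul_single, single_mul_single]
    rw [e1, e2]
    exact (restrict_single (s' * g * t') (r₁ * r * r₂)).trans e3.symm
  · rw [restrict_single_of_not _ fun h' => h (H.dom_of_mul hs.1 g.2 ht.1 ht.2 h'.1)]
    by_cases hs' : star s * s = e
    · rw [restrict_single_of_not r₂ fun h' => h ⟨hs', h'.1⟩, mul_zero]
    · rw [restrict_single_of_not r₁ fun h' => hs' h'.1, zero_mul, zero_mul]

lemma restrict_eq_zero {I : Set S} (hI : ∀ s ∈ I, ∀ t, s * t ∈ I ∧ t * s ∈ I) {e : S} (heI : e ∉ I)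
    {a : MonoidAlgebra R S} (ha : SuppIn (· ∈ I) a) : restrict star e a = 0 := by
  ext g
  by_contra h
  exact heI (by rw [← g.2.1]; exact (hI _ (ha g.1 h) _).2)

lemma primeMod_of_bisimpleMod {I : Set S} (hI : ∀ s ∈ I, ∀ t, s * t ∈ I ∧ t * s ∈ I)
    (hB : BisimpleMod star I) (e : S) (he : e * e = e) (heI : e ∉ I)
    (hG : letI := maxGroup S star h1 h2 h3 e he
      IsPrimeRingE (MonoidAlgebra R (MaxGrp S star e))) :
    PrimeMod R I := by
  let _ := maxGroup S star h1 h2 h3 e he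
  have H : IsInv star := ⟨h1, h2, h3⟩
  obtain ⟨⟨γ, hγ⟩, hG⟩ := hG
  have hR : (1 : R) ≠ 0 := fun h => hγ (by
    ext g
    rw [← mul_one (γ.coeff g), h, mul_zero]; rfl)
  refine ⟨⟨single e 1, fun h => heI (h e ?_)⟩, fun a b hab => ?_⟩
  · simpa [coeff_single] using hR
  by_contra hcon
  rw [not_or] at hcon
  obtain ⟨u, v, hu, hu'⟩ := exists_translate H hI hB he heI a hcon.1
  obtain ⟨u', v', hv, hv'⟩ := exists_translate H hI hB he heI b hcon.2
  have hz : ∀ x, restrict star e (single u 1 * a * single v 1) * x *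
      restrict star e (single u' 1 * b * single v' 1) = 0 := by
    intro x
    induction x using MonoidAlgebra.induction_linear with
    | zero => rw [mul_zero, zero_mul]
    | add x y hx hy => rw [mul_add, add_mul, hx, hy, add_zero]
    | single g r =>
      rw [← restrict_mul h1 h2 h3 e he g r _ _ hu' hv']
      apply restrict_eq_zero hI heI
      have hT : ∀ c : MonoidAlgebra R S, SuppIn (fun _ => True) c := fun _ _ _ => trivial
      have := (hT (single u 1)).mul ((hab (single v 1 * single g.1 r * single u' 1)).mul
        (hT (single v' 1)) (W := (· ∈ I)) fun s t hs _ => (hI s hs t).1) (W := (· ∈ I))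
          fun s t _ ht => (hI t ht s).2
      simpa only [mul_assoc] using this
  have he' : star e * e = e ∧ e * star e = e := by rw [H.star_idem he, he]; exact ⟨rfl, rfl⟩
  have hne : ∀ c : MonoidAlgebra R S, c.coeff e ≠ 0 → restrict star e c ≠ 0 := fun c hc h =>
    hc (by
      have : (restrict star e c).coeff ⟨e, he'⟩ = 0 := by rw [h]; rfl
      exact this)
  exact (hG _ _ hz).elim (hne _ hu) (hne _ hv)

end Sufficiency

/-! ### Necessity -/

section Necessity

open MonoidAlgebra

variable {S : Type} [Semigroup S] {R : Type} [CommRing R] {star : S → S}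

/-- `f` is an idempotent strictly below `e`. -/
def StrictBelow (e f : S) : Prop := f * f = f ∧ IdemLe S f e ∧ f ≠ e

/-- For a finite set `F` of idempotents strictly below `e`, the product `∏ (e - f)` over `f ∈ F` has
the form `e + q` with `q` supported strictly below `e`, and is annihilated by every `f ∈ F`. -/
lemma exists_prod (H : IsInv star) {e : S} (he : e * e = e) (F : Finset S)
    (hF : ∀ f ∈ F, StrictBelow e f) :
    ∃ q : MonoidAlgebra R S, SuppIn (StrictBelow e) q ∧
      ∀ f ∈ F, single f 1 * (single e 1 + q) = 0 ∧ (single e 1 + q) * single f 1 = 0 := by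
  classical
  induction F using Finset.induction_on with
  | empty => exact ⟨0, .zero, by simp⟩
  | insert f F hf ih =>
    obtain ⟨q, hq, hqF⟩ := ih fun g hg => hF g (Finset.mem_insert_of_mem hg)
    obtain ⟨ff, ⟨fe, ef⟩, fne⟩ := hF f (Finset.mem_insert_self _ _)
    have hcomm : ∀ g : S, g * g = g →
        single g 1 * (single e 1 + q) = (single e 1 + q) * single g (1 : R) := by
      intro g hg
      rw [mul_add, add_mul, single_mul_single, single_mul_single, H.idem_comm hg he]
      congr 1
      refine hq.induction (motive := fun q => single g 1 * q = q * single g 1)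
        (by rw [mul_zero, zero_mul]) (fun a b ha hb => by rw [mul_add, add_mul, ha, hb])
        fun h r hh => ?_
      rw [single_mul_single, single_mul_single, H.idem_comm hg hh.1, mul_comm]
    have hff : single f (1 : R) * single f 1 = single f 1 := by
      rw [single_mul_single, ff, one_mul]
    refine ⟨q - single f 1 * (single e 1 + q), ?_, ?_⟩
    · rw [sub_eq_add_neg]
      refine hq.add (SuppIn.neg ?_)
      have hp : SuppIn (fun g => g * g = g) (single e 1 + q) :=
        (SuppIn.single (Q := fun g => g * g = g) (1 : R) he).add fun g hg => (hq g hg).1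
      refine (SuppIn.single (Q := (· = f)) (1 : R) rfl).mul hp ?_
      rintro _ g rfl hg
      refine ⟨H.idem_mul ff hg, ⟨?_, by rw [← mul_assoc, ef]⟩, fun h => fne ?_⟩
      · rw [mul_assoc, H.idem_comm hg he, ← mul_assoc, fe]
      · rw [← fe, ← h, ← mul_assoc, ff]
    · rw [← add_sub_assoc]
      set p := single e 1 + q
      intro g hg
      rcases Finset.mem_insert.1 hg with rfl | hg
      · rw [mul_sub, sub_mul, ← mul_assoc, hff, sub_self, hcomm _ ff, mul_assoc, hff, sub_self]
        exact ⟨rfl, rfl⟩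
      · obtain ⟨a, b⟩ := hqF g hg
        rw [mul_sub, sub_mul, a, b, hcomm f ff, ← mul_assoc, a, zero_mul, ← hcomm f ff, mul_assoc,
          b, mul_zero, sub_zero]
        exact ⟨rfl, rfl⟩

/-- For a pseudofinite semilattice, the element of the semigroup algebra corresponding to the
indicator function of the isolated principal character at `e`, written as `e + q`. -/
lemma exists_point (H : IsInv star) (hP : Pseudofinite S) {e : S} (he : e * e = e) :
    ∃ q : MonoidAlgebra R S, SuppIn (StrictBelow e) q ∧
      ∀ f, StrictBelow e f →
        single f 1 * (single e 1 + q) = 0 ∧ (single e 1 + q) * single f 1 = 0 := by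
  obtain ⟨F, hF, hF'⟩ := hP e he
  obtain ⟨q, hq, h⟩ := exists_prod (R := R) H he F hF
  refine ⟨q, hq, fun f hf => ?_⟩
  obtain ⟨g, hg, hfg, hgf⟩ := hF' f hf.1 hf.2.1 hf.2.2
  obtain ⟨a, b⟩ := h g hg
  have e1 : single f (1 : R) = single f 1 * single g 1 := by
    rw [single_mul_single, hfg, one_mul]
  have e2 : single f (1 : R) = single g 1 * single f 1 := by
    rw [single_mul_single, hgf, one_mul]
  constructor
  · rw [e1, mul_assoc, a, mul_zero]
  · rw [e2, ← mul_assoc, b, zero_mul]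

/-- `p` is an element of the form `e + q` with `q` supported strictly below `e`, annihilated by all
idempotents strictly below `e`. -/
structure IsPoint (e : S) (p : MonoidAlgebra R S) : Prop where
  supp : ∃ q : MonoidAlgebra R S, SuppIn (StrictBelow e) q ∧ p = single e 1 + q
  left : ∀ f, StrictBelow e f → single f 1 * p = 0
  right : ∀ f, StrictBelow e f → p * single f 1 = 0

namespace IsPoint

variable {e : S} {p : MonoidAlgebra R S}

lemma single_mul (hp : IsPoint e p) (he : e * e = e) : single e 1 * p = p := by
  obtain ⟨q, hq, rfl⟩ := hp.supp
  rw [mul_add, single_mul_single, he, one_mul]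
  congr 1
  refine hq.induction (motive := fun q => single e 1 * q = q) (mul_zero _)
    (fun a b ha hb => by rw [mul_add, ha, hb]) fun f r hf => ?_
  rw [single_mul_single, hf.2.1.2, one_mul]

lemma mul_single (hp : IsPoint e p) (he : e * e = e) : p * single e 1 = p := by
  obtain ⟨q, hq, rfl⟩ := hp.supp
  rw [add_mul, single_mul_single, he, one_mul]
  congr 1
  refine hq.induction (motive := fun q => q * single e 1 = q) (zero_mul _)
    (fun a b ha hb => by rw [add_mul, ha, hb]) fun f r hf => ?_
  rw [single_mul_single, hf.2.1.1, mul_one]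

lemma single_mul_eq_zero (hp : IsPoint e p) (H : IsInv star) (he : e * e = e) {s : S} (r : R)
    (hs : s * e = s) (hd : star s * s ≠ e) : single s r * p = 0 := by
  have hf : StrictBelow e (star s * s) := by
    have : star s * s * e = star s * s := by rw [mul_assoc, hs]
    exact ⟨H.d_idem s, ⟨this, by rw [H.idem_comm he (H.d_idem s), this]⟩, hd⟩
  have : single s r = single s r * single (star s * s) 1 := by
    rw [single_mul_single, ← mul_assoc, H.reg, mul_one]
  rw [this, mul_assoc, hp.left _ hf, mul_zero]

lemma mul_single_eq_zero (hp : IsPoint e p) (H : IsInv star) (he : e * e = e) {s : S} (r : R)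
    (hs : e * s = s) (hd : s * star s ≠ e) : p * single s r = 0 := by
  have hf : StrictBelow e (s * star s) := by
    have : e * (s * star s) = s * star s := by rw [← mul_assoc, hs]
    exact ⟨H.r_idem s, ⟨by rw [H.idem_comm (H.r_idem s) he, this], this⟩, hd⟩
  have : single s r = single (s * star s) 1 * single s r := by
    rw [single_mul_single, H.reg, one_mul]
  rw [this, ← mul_assoc, hp.right _ hf, zero_mul]

/-- Elements sandwiched between the points at `f` and at `e` only see arrows from `e` to `f`. -/
lemma sandwich (hp : IsPoint e p) (H : IsInv star) (he : e * e = e) {f : S} (hf : f * f = f)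
    {p' : MonoidAlgebra R S} (hp' : IsPoint f p') (s : S) (r : R) :
    p' * single s r * p = 0 ∨ ∃ t, star t * t = e ∧ t * star t = f ∧
      p' * single s r * p = p' * single t r * p := by
  have h0 : p' * single s r * p = p' * single (f * s * e) r * p := by
    conv_lhs => rw [← hp.single_mul he, ← hp'.mul_single hf]
    have : single (f * s * e) r = single f 1 * single s r * single e (1 : R) := by
      rw [single_mul_single, single_mul_single, one_mul, mul_one]
    rw [this]
    simp only [mul_assoc]
  by_cases h1 : star (f * s * e) * (f * s * e) = e
  · by_cases h2 : f * s * e * star (f * s * e) = f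
    · exact Or.inr ⟨_, h1, h2, h0⟩
    · left
      rw [h0, hp'.mul_single_eq_zero H hf r _ h2, zero_mul]
      rw [← mul_assoc, ← mul_assoc, hf]
  · left
    rw [h0, mul_assoc, hp.single_mul_eq_zero H he r _ h1, mul_zero]
    rw [mul_assoc, he]

lemma coeff_self (hp : IsPoint e p) : p.coeff e = 1 := by
  classical
  obtain ⟨q, hq, rfl⟩ := hp.supp
  have : q.coeff e = 0 := by
    by_contra h
    exact (hq e h).2.2 rfl
  simp [coeff_single, this]

lemma mul_self (hp : IsPoint e p) (he : e * e = e) : p * p = p := by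
  obtain ⟨q, hq, h⟩ := hp.supp
  have : q * p = 0 := by
    refine hq.induction (motive := fun q => q * p = 0) (zero_mul _)
      (fun a b ha hb => by rw [add_mul, ha, hb, add_zero]) fun f r hf => ?_
    have : single f r = single f r * single f 1 := by rw [single_mul_single, hf.1, mul_one]
    rw [this, mul_assoc, hp.left f hf, mul_zero]
  conv_lhs => enter [1]; rw [h]
  rw [add_mul, this, add_zero, hp.single_mul he]

/-- For `g` in the maximal subgroup at `e` and `f` strictly below `e`, the product `f g` does not have
domain `e`, so it annihilates `p`; dually for `g f`.  Hence `g p = p g p = p g`. -/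
lemma group_comm (hp : IsPoint e p) (H : IsInv star) (he : e * e = e) {g : S}
    (hg : star g * g = e) (hg' : g * star g = e) (r : R) :
    p * single g r * p = single g r * p ∧ p * single g r * p = p * single g r := by
  have hge : g * e = g := by rw [← hg, ← mul_assoc, H.reg]
  have heg : e * g = g := by rw [← hg', H.reg]
  have hge' : e * star g = star g := by rw [← hg, H.reg']
  have heg' : star g * e = star g := by rw [← hg', ← mul_assoc, H.reg']
  obtain ⟨q, hq, h⟩ := hp.supp
  constructor
  · have : q * single g r * p = 0 := by
      refine hq.induction (motive := fun q => q * single g r * p = 0)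
        (by rw [zero_mul, zero_mul])
        (fun a b ha hb => by rw [add_mul, add_mul, ha, hb, add_zero]) fun f r' hf => ?_
      rw [single_mul_single]
      refine hp.single_mul_eq_zero H he _ (by rw [mul_assoc, hge]) fun hd => hf.2.2 ?_
      rw [H.star_mul, H.star_idem hf.1] at hd
      calc f = (e * f) * (f * e) := by rw [hf.2.1.1, hf.2.1.2, hf.1]
        _ = g * (star g * f * (f * g)) * star g := by rw [← hg']; simp only [mul_assoc]
        _ = e := by rw [hd, hge, hg']
    conv_lhs => enter [1, 1]; rw [h]
    rw [add_mul, add_mul, this, add_zero, single_mul_single, heg, one_mul]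
  · have : p * single g r * q = 0 := by
      refine hq.induction (motive := fun q => p * single g r * q = 0)
        (by rw [mul_zero])
        (fun a b ha hb => by rw [mul_add, ha, hb, add_zero]) fun f r' hf => ?_
      rw [mul_assoc, single_mul_single]
      refine hp.mul_single_eq_zero H he _ (by rw [← mul_assoc, heg]) fun hd => hf.2.2 ?_
      rw [H.star_mul, H.star_idem hf.1] at hd
      calc f = (e * f) * (f * e) := by rw [hf.2.1.1, hf.2.1.2, hf.1]
        _ = star g * (g * f * (f * star g)) * g := by rw [← hg]; simp only [mul_assoc]
        _ = e := by rw [hd, heg', hg]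
    conv_lhs => enter [2]; rw [h]
    rw [mul_add, this, add_zero, mul_assoc, single_mul_single, hge, mul_one]

end IsPoint

lemma exists_isPoint (R : Type) [CommRing R] (H : IsInv star) (hP : Pseudofinite S) {e : S}
    (he : e * e = e) : ∃ p : MonoidAlgebra R S, IsPoint e p := by
  obtain ⟨q, hq, h⟩ := exists_point (R := R) H hP he
  exact ⟨single e 1 + q, ⟨q, hq, rfl⟩, fun f hf => (h f hf).1, fun f hf => (h f hf).2⟩

lemma PrimeMod.one_ne_zero {I : Set S} (h : PrimeMod R I) : (1 : R) ≠ 0 := by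
  intro h0
  obtain ⟨a, ha⟩ := h.1
  refine ha fun s hs => absurd ?_ hs
  rw [← mul_one (a.coeff s), h0, mul_zero]

lemma IsPoint.not_suppIn {I : Set S} (h : PrimeMod R I) {e : S} (heI : e ∉ I)
    {p : MonoidAlgebra R S} (hp : IsPoint e p) : ¬ SuppIn (· ∈ I) p := fun h' =>
  heI (h' e (by rw [hp.coeff_self]; exact h.one_ne_zero))

lemma bisimpleMod_of_primeMod (H : IsInv star) (hP : Pseudofinite S) {I : Set S}
    (h : PrimeMod R I) : BisimpleMod star I := by
  intro e f he hf heI hfI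
  obtain ⟨p, hp⟩ := exists_isPoint R H hP he
  obtain ⟨p', hp'⟩ := exists_isPoint R H hP hf
  by_contra! hcon
  have h0 : ∀ x, p' * x * p = 0 := by
    intro x
    induction x using MonoidAlgebra.induction_linear with
    | zero => rw [mul_zero, zero_mul]
    | add x y hx hy => rw [mul_add, add_mul, hx, hy, add_zero]
    | single s r =>
      rcases hp.sandwich H he hf hp' s r with h | ⟨t, ht, ht', -⟩
      · exact h
      · exact absurd ht' (hcon t ht)
  rcases h.2 p' p fun x => by rw [h0]; exact .zero with h' | h'
  · exact hp'.not_suppIn h hfI h'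
  · exact hp.not_suppIn h heI h'

variable (h1 : ∀ s, s * star s * s = s)
  (h2 : ∀ s, star s * s * star s = star s)
  (h3 : ∀ s t, s * t * s = s → t * s * t = t → t = star s)

/-- The embedding of the algebra of the maximal subgroup at `e` into the semigroup algebra. -/
noncomputable def incl (star : S → S) (e : S) (α : MonoidAlgebra R (MaxGrp S star e)) :
    MonoidAlgebra R S :=
  α.mapDomain Subtype.val

lemma incl_add {e : S} (α β : MonoidAlgebra R (MaxGrp S star e)) :
    incl star e (α + β) = incl star e α + incl star e β :=
  mapDomain_add _ _ _

lemma incl_zero {e : S} : incl star e (0 : MonoidAlgebra R (MaxGrp S star e)) = 0 :=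
  mapDomain_zero _

lemma incl_single {e : S} (g : MaxGrp S star e) (r : R) :
    incl star e (single g r) = single g.1 r :=
  mapDomain_single

lemma incl_mul {e : S} (he : e * e = e) (α β : MonoidAlgebra R (MaxGrp S star e)) :
    letI := maxGroup S star h1 h2 h3 e he
    incl star e (α * β) = incl star e α * incl star e β := by
  let _ := maxGroup S star h1 h2 h3 e he
  exact mapDomain_mul (⟨Subtype.val, fun _ _ => rfl⟩ : MaxGrp S star e →ₙ* S) α β

lemma coeff_incl {e : S} (α : MonoidAlgebra R (MaxGrp S star e)) (g : MaxGrp S star e) :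
    (incl star e α).coeff g.1 = α.coeff g :=
  Finsupp.mapDomain_apply Subtype.val_injective _ _

lemma incl_point_comm (H : IsInv star) {e : S} (he : e * e = e) {p : MonoidAlgebra R S}
    (hp : IsPoint e p) (α : MonoidAlgebra R (MaxGrp S star e)) :
    incl star e α * p = p * incl star e α := by
  induction α using MonoidAlgebra.induction_linear with
  | zero => rw [incl_zero, zero_mul, mul_zero]
  | add x y hx hy => rw [incl_add, add_mul, mul_add, hx, hy]
  | single g r =>
    obtain ⟨a, b⟩ := hp.group_comm H he g.2.1 g.2.2 r
    rw [incl_single, ← a, b]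

/-- Multiplying by the point at `e` adds only terms outside the maximal subgroup. -/
lemma coeff_incl_mul_point (H : IsInv star) {e : S} {p : MonoidAlgebra R S}
    (hp : IsPoint e p) (α : MonoidAlgebra R (MaxGrp S star e)) (g : MaxGrp S star e) :
    (incl star e α * p).coeff g.1 = α.coeff g := by
  obtain ⟨q, hq, rfl⟩ := hp.supp
  have hα : incl star e α * single e 1 = incl star e α := by
    induction α using MonoidAlgebra.induction_linear with
    | zero => rw [incl_zero, zero_mul]
    | add x y hx hy => rw [incl_add, add_mul, hx, hy]
    | single g r =>
      have hge : ∀ s, star s * s = e → s * e = s := fun s hs => by rw [← hs, ← mul_assoc, H.reg]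
      rw [incl_single, single_mul_single, mul_one, hge _ g.2.1]
  have hq0 : SuppIn (fun s => ∃ f, StrictBelow e f ∧ s * f = s) (incl star e α * q) :=
    SuppIn.mul (P := fun _ => True) (fun _ _ => trivial) hq fun s f _ hf =>
      ⟨f, hf, by rw [mul_assoc, hf.1]⟩
  have hq1 : (incl star e α * q).coeff g.1 = 0 := by
    by_contra hne
    obtain ⟨f, hf, hgf⟩ := hq0 _ hne
    have hef : ∀ s, star s * s = e → s * f = s → e * f = e := fun s hs h => by
      rw [← hs, mul_assoc, h]
    exact hf.2.2 (hf.2.1.2.symm.trans (hef _ g.2.1 hgf))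
  rw [mul_add, hα, coeff_add, Finsupp.add_apply, hq1, add_zero, coeff_incl]

lemma group_prime_of_primeMod (hP : Pseudofinite S) {I : Set S}
    (hI : ∀ s ∈ I, ∀ t, s * t ∈ I ∧ t * s ∈ I) (h : PrimeMod R I) {e : S} (he : e * e = e)
    (heI : e ∉ I) :
    letI := maxGroup S star h1 h2 h3 e he
    IsPrimeRingE (MonoidAlgebra R (MaxGrp S star e)) := by
  let _ := maxGroup S star h1 h2 h3 e he
  have H : IsInv star := ⟨h1, h2, h3⟩
  obtain ⟨p, hp⟩ := exists_isPoint R H hP he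
  refine ⟨⟨single 1 1, fun h0 => h.one_ne_zero (single_eq_zero.1 h0)⟩, fun α β hαβ => ?_⟩
  have hz : ∀ x, (incl star e α * p) * x * (p * incl star e β) = 0 := by
    intro x
    induction x using MonoidAlgebra.induction_linear with
    | zero => rw [mul_zero, zero_mul]
    | add x y hx hy => rw [mul_add, add_mul, hx, hy, add_zero]
    | single s r =>
      have e1 : (incl star e α * p) * single s r * (p * incl star e β) =
          incl star e α * (p * single s r * p) * incl star e β := by simp only [mul_assoc]
      rw [e1]
      rcases hp.sandwich H he he hp s r with h0 | ⟨t, ht, ht', h0⟩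
      · rw [h0, mul_zero, zero_mul]
      · have e2 : incl star e (α * single ⟨t, ht, ht'⟩ r * β) =
            incl star e α * single t r * incl star e β := by
          have := incl_single (star := star) ⟨t, ht, ht'⟩ r
          rw [incl_mul h1 h2 h3 he, incl_mul h1 h2 h3 he, this]
        rw [h0, (hp.group_comm H he ht ht' r).1, mul_assoc, mul_assoc (single t r),
          ← incl_point_comm H he hp, ← mul_assoc, ← mul_assoc, ← e2, hαβ, incl_zero, zero_mul]
  have hfin : ∀ γ : MonoidAlgebra R (MaxGrp S star e),
      SuppIn (· ∈ I) (incl star e γ * p) → γ = 0 := by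
    intro γ hγ
    ext g
    by_contra hne
    have := hγ g.1 (by rw [coeff_incl_mul_point H hp]; exact hne)
    exact heI (by rw [← g.2.1]; exact (hI _ this _).2)
  refine (h.2 _ _ fun x => by rw [hz]; exact .zero).imp (hfin α) fun hβ => hfin β ?_
  rwa [incl_point_comm H he hp]

end Necessity

/-- Munn. Let `S` be an inverse semigroup (multiplication and
involution `star` with the uniqueness property making `S` inverse).  If `S` is
(0-)bisimple with maximal subgroup `G` at a (non-zero) idempotent `e` and `RG`
is prime, then `RS` (resp. `R₀S`) is prime; conversely, if `E(S)` is
pseudofinite and `RS` (resp. `R₀S`) is prime, then `S` is (0-)bisimple and `RG`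
is prime. -/
theorem stmt19 (S : Type) [Semigroup S] (star : S → S)
    (h1 : ∀ s, s * star s * s = s)
    (h2 : ∀ s, star s * s * star s = star s)
    (h3 : ∀ s t, s * t * s = s → t * s * t = t → t = star s)
    (R : Type) [CommRing R] :
    -- plain case, sufficiency
    ((Bisimple S star) → ∀ (e : S) (he : e * e = e),
      (letI := maxGroup S star h1 h2 h3 e he;
        IsPrimeRingE (MonoidAlgebra R (MaxGrp S star e))) →
      IsPrimeRingE (MonoidAlgebra R S)) ∧
    -- plain case, converse for pseudofinite E(S)
    (Pseudofinite S → IsPrimeRingE (MonoidAlgebra R S) →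
      Bisimple S star ∧ ∀ (e : S) (he : e * e = e),
        letI := maxGroup S star h1 h2 h3 e he
        IsPrimeRingE (MonoidAlgebra R (MaxGrp S star e))) ∧
    -- contracted case
    (∀ z : S, (∀ s : S, z * s = z ∧ s * z = z) →
      ((ZeroBisimple S star z → ∀ (e : S) (he : e * e = e), e ≠ z →
        (letI := maxGroup S star h1 h2 h3 e he;
          IsPrimeRingE (MonoidAlgebra R (MaxGrp S star e))) →
        IsPrimeRingE (Contracted S R z)) ∧
      (Pseudofinite S → IsPrimeRingE (Contracted S R z) →
        ZeroBisimple S star z ∧ ∀ (e : S) (he : e * e = e), e ≠ z →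
          letI := maxGroup S star h1 h2 h3 e he
          IsPrimeRingE (MonoidAlgebra R (MaxGrp S star e))))) := by
  have H : IsInv star := ⟨h1, h2, h3⟩
  refine ⟨fun hB e he hG => ?_, fun hP h => ?_, fun z hz => ?_⟩
  · exact primeMod_empty.1 (primeMod_of_bisimpleMod h1 h2 h3 (fun s hs => hs.elim)
      (fun e f he hf _ _ => hB e f he hf) e he (Set.notMem_empty e) hG)
  · have h' := primeMod_empty.2 h
    refine ⟨fun e f he hf => bisimpleMod_of_primeMod H hP h' e f he hf (Set.notMem_empty e)
      (Set.notMem_empty f), fun e he => ?_⟩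
    exact group_prime_of_primeMod h1 h2 h3 hP (fun s hs => hs.elim) h' he (Set.notMem_empty e)
  · have hI : ∀ s ∈ ({z} : Set S), ∀ t, s * t ∈ ({z} : Set S) ∧ t * s ∈ ({z} : Set S) := by
      rintro s rfl t
      exact hz t
    refine ⟨fun hB e he hez hG => ?_, fun hP h => ?_⟩
    · exact (primeMod_zero hz).1 (primeMod_of_bisimpleMod h1 h2 h3 hI hB e he hez hG)
    · have h' := (primeMod_zero hz).2 h
      refine ⟨bisimpleMod_of_primeMod H hP h', fun e he hez => ?_⟩
      exact group_prime_of_primeMod h1 h2 h3 hP hI h' he hez
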